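/- The move H5 is derivable from the homotopy moves: for all words x, y, z, t and distinct letters A, B, C not occurring in them, the word xAByCAzBCt is homotopic to xBAyACzCBt. -/

import Mathlib

/-- A Gauss word: every letter that occurs, occurs exactly twice. -/
def IsGauss (w : List ℕ) : Prop := ∀ a ∈ w, w.count a = 2

/-- Rank of a word: the number of distinct letters occurring in it. -/
def rank (w : List ℕ) : ℕ := w.dedup.length

/-- Two words are isomorphic if one is obtained from the other by an
injective (hence bijective onto its image) relabeling of letters. -/
def Isomorphic (w₁ w₂ : List ℕ) : Prop :=
  ∃ f : ℕ → ℕ, Function.Injective f ∧ w₂ = w₁.map f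

/-- One step: an isomorphism or a homotopy move H1, H2, H3. -/
inductive Move : List ℕ → List ℕ → Prop
  | iso {w₁ w₂ : List ℕ} : Isomorphic w₁ w₂ → Move w₁ w₂
  | h1 (x y : List ℕ) (A : ℕ) (hA : A ∉ x ++ y) :
      Move (x ++ [A, A] ++ y) (x ++ y)
  | h2 (x y z : List ℕ) (A B : ℕ) (hAB : A ≠ B)
      (hA : A ∉ x ++ y ++ z) (hB : B ∉ x ++ y ++ z) :
      Move (x ++ [A, B] ++ y ++ [B, A] ++ z) (x ++ y ++ z)
  | h3 (x y z t : List ℕ) (A B C : ℕ)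
      (hAB : A ≠ B) (hAC : A ≠ C) (hBC : B ≠ C)
      (hA : A ∉ x ++ y ++ z ++ t) (hB : B ∉ x ++ y ++ z ++ t)
      (hC : C ∉ x ++ y ++ z ++ t) :
      Move (x ++ [A, B] ++ y ++ [A, C] ++ z ++ [B, C] ++ t)
           (x ++ [B, A] ++ y ++ [C, A] ++ z ++ [C, B] ++ t)

/-- Homotopy: the equivalence relation generated by isomorphisms and H1–H3. -/
def Homotopic : List ℕ → List ℕ → Prop := Relation.EqvGen Move

/-- H5 is derivable: xAByCAzBCt is homotopic to xBAyACzCBt. -/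
theorem h5_derivable (x y z t : List ℕ) (A B C : ℕ)
    (hAB : A ≠ B) (hAC : A ≠ C) (hBC : B ≠ C)
    (hA : A ∉ x ++ y ++ z ++ t) (hB : B ∉ x ++ y ++ z ++ t)
    (hC : C ∉ x ++ y ++ z ++ t) :
    Homotopic (x ++ [A, B] ++ y ++ [C, A] ++ z ++ [B, C] ++ t)
              (x ++ [B, A] ++ y ++ [A, C] ++ z ++ [C, B] ++ t) := by
  -- two fresh letters D, E
  obtain ⟨D, hD⟩ := Infinite.exists_notMem_finset (A :: B :: C :: (x ++ y ++ z ++ t)).toFinset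
  obtain ⟨E, hE⟩ := Infinite.exists_notMem_finset
    (D :: A :: B :: C :: (x ++ y ++ z ++ t)).toFinset
  simp only [List.mem_toFinset, List.mem_cons, List.mem_append, not_or] at hA hB hC hD hE
  -- insert DE ... ED
  have m1 : Move (x ++ [D, E] ++ ([A, B] ++ y ++ [C, A] ++ z ++ [B, C]) ++ [E, D] ++ t)
      (x ++ ([A, B] ++ y ++ [C, A] ++ z ++ [B, C]) ++ t) :=
    Move.h2 _ _ _ D E (by grind) (by simp; grind) (by simp; grind)
  -- H3 on the letters A, E, C
  have m2 : Move ((x ++ [D]) ++ [A, E] ++ (B :: y) ++ [A, C] ++ (z ++ [B]) ++ [E, C] ++ (D :: t))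
      ((x ++ [D]) ++ [E, A] ++ (B :: y) ++ [C, A] ++ (z ++ [B]) ++ [C, E] ++ (D :: t)) :=
    Move.h3 _ _ _ _ A E C (by grind) (by grind) (by grind)
      (by simp; grind) (by simp; grind) (by simp; grind)
  -- remove EB ... BE
  have m3 : Move ((x ++ [D, A]) ++ [E, B] ++ (y ++ [A, C] ++ z) ++ [B, E] ++ (C :: D :: t))
      ((x ++ [D, A]) ++ (y ++ [A, C] ++ z) ++ (C :: D :: t)) :=
    Move.h2 _ _ _ E B (by grind) (by simp; grind) (by simp; grind)
  -- rename D to B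
  have hfix : ∀ l : List ℕ, B ∉ l → D ∉ l → l.map (Equiv.swap B D) = l := by
    intro l h1 h2
    conv_rhs => rw [← List.map_id l]
    refine List.map_congr_left fun a ha => ?_
    exact Equiv.swap_apply_of_ne_of_ne (by grind) (by grind)
  have m4 : Move ((x ++ [D, A]) ++ (y ++ [A, C] ++ z) ++ (C :: D :: t))
      (x ++ [B, A] ++ y ++ [A, C] ++ z ++ [C, B] ++ t) := by
    refine Move.iso ⟨Equiv.swap B D, (Equiv.swap B D).injective, ?_⟩
    have eA : Equiv.swap B D A = A := Equiv.swap_apply_of_ne_of_ne (by grind) (by grind)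
    have eC : Equiv.swap B D C = C := Equiv.swap_apply_of_ne_of_ne (by grind) (by grind)
    simp [hfix x (by grind) (by grind), hfix y (by grind) (by grind),
      hfix z (by grind) (by grind), hfix t (by grind) (by grind), eA, eC]
  have r1 := Relation.EqvGen.symm _ _ (Relation.EqvGen.rel _ _ m1)
  have r2 := Relation.EqvGen.symm _ _ (Relation.EqvGen.rel _ _ m2)
  have r3 := Relation.EqvGen.rel _ _ m3
  have r4 := Relation.EqvGen.rel _ _ m4
  simp only [List.append_assoc, List.cons_append, List.nil_append] at r1 r2 r3 r4
  simp only [Homotopic, List.append_assoc, List.cons_append, List.nil_append]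
  exact ((r1.trans _ _ _ r2).trans _ _ _ r3).trans _ _ _ r4
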